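/- The Witten zeta function ζ_{so(5)}(s) = 6^s ∑_{m,n≥1} (m n (m+n)(m+2n))^{-s} has a simple pole at s = 1/3 with residue (2^{1/3} + 1) · ζ(1/3) / 3^{2/3}, where ζ is the Riemann zeta function. -/

import Mathlib

open Filter Topology

open MeasureTheory Set

namespace SO5

def U : Set ℂ := {s : ℂ | 3 / 10 < s.re} ∩ Metric.ball 0 1

lemma U_open : IsOpen U :=
  (isOpen_lt continuous_const Complex.continuous_re).inter Metric.isOpen_ball

lemma U_convex : Convex ℝ U :=
  (convex_halfSpace_re_gt _).inter (convex_ball _ _)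

lemma U_re {s : ℂ} (hs : s ∈ U) : 3 / 10 < s.re := hs.1
lemma U_norm {s : ℂ} (hs : s ∈ U) : ‖s‖ ≤ 1 := by
  have := hs.2
  rw [mem_ball_zero_iff] at this
  exact this.le

lemma cpow_diff {s : ℂ} {A B L : ℝ} (hL : 0 < L) (hA : L ≤ A) (hB : L ≤ B) (hs : 0 < s.re) :
    ‖(A : ℂ) ^ (-s) - (B : ℂ) ^ (-s)‖ ≤ ‖s‖ * L ^ (-s.re - 1) * |A - B| := by
  have := Convex.norm_image_sub_le_of_norm_hasDerivWithin_le (𝕜 := ℝ) (s := Ici L)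
    (f := fun t : ℝ => (t : ℂ) ^ (-s)) (f' := fun t : ℝ => (-s) * (t : ℂ) ^ (-s - 1))
    (C := ‖s‖ * L ^ (-s.re - 1)) (x := B) (y := A) ?_ ?_ (convex_Ici L) hB hA
  · simpa [Real.norm_eq_abs] using this
  · intro t ht
    have ht0 : 0 < t := lt_of_lt_of_le hL ht
    have h1 : HasDerivAt (fun z : ℂ => z ^ (-s)) ((-s) * (t : ℂ) ^ (-s - 1)) (t : ℂ) := by
      have := (hasDerivAt_id (t : ℂ)).cpow_const (c := -s) (Or.inl (by simpa using ht0))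
      simpa using this
    exact h1.comp_ofReal.hasDerivWithinAt
  · intro t ht
    have ht0 : 0 < t := lt_of_lt_of_le hL ht
    rw [norm_mul, norm_neg, Complex.norm_cpow_eq_rpow_re_of_pos ht0]
    gcongr
    simp only [Complex.sub_re, Complex.neg_re, Complex.one_re]
    exact Real.rpow_le_rpow_of_nonpos hL ht (by linarith)

lemma cpow_diff' {s : ℂ} (hs : s ∈ U) {A B w K : ℝ} (hw : 1 ≤ w) (hA : w ^ 3 ≤ A) (hB : w ^ 3 ≤ B)
    (hK : |A - B| ≤ K * w ^ 2) :
    ‖(A : ℂ) ^ (-s) - (B : ℂ) ^ (-s)‖ ≤ K * w ^ (-(19 / 10) : ℝ) := by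
  have h0 : 0 < w := by linarith
  have hre := U_re hs
  have hK0 : 0 ≤ K := by
    have := (abs_nonneg _).trans hK
    exact nonneg_of_mul_nonneg_left this (by positivity)
  refine (cpow_diff (L := w ^ 3) (by positivity) hA hB (by linarith)).trans ?_
  calc ‖s‖ * (w ^ 3) ^ (-s.re - 1) * |A - B| ≤ 1 * (w ^ 3) ^ (-s.re - 1) * (K * w ^ 2) := by
        gcongr
        exact U_norm hs
    _ = K * w ^ (3 * (-s.re - 1) + 2) := by
        rw [Real.rpow_add h0, Real.rpow_mul h0.le]
        norm_cast
        ring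
    _ ≤ K * w ^ (-(19 / 10) : ℝ) := by
        gcongr
        linarith

lemma holo_integral {V : Set ℂ} (hV : IsOpen V) {A B g : ℝ → ℝ} {T : Set ℝ} (hT : MeasurableSet T)
    (hA : Continuous A) (hB : Continuous B) (hA0 : ∀ x ∈ T, 0 < A x) (hB0 : ∀ x ∈ T, 0 < B x)
    (hg : IntegrableOn g T)
    (hb : ∀ s ∈ V, ∀ x ∈ T, ‖(A x : ℂ) ^ (-s) - (B x : ℂ) ^ (-s)‖ ≤ g x) :
    DifferentiableOn ℂ (fun s => ∫ x in T, ((A x : ℂ) ^ (-s) - (B x : ℂ) ^ (-s))) V := by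
  intro s₀ hs₀
  obtain ⟨ε, hε, hball⟩ := Metric.isOpen_iff.1 hV s₀ hs₀
  have hmA : Measurable (fun x => (A x : ℂ)) := by fun_prop
  have hmB : Measurable (fun x => (B x : ℂ)) := by fun_prop
  have hder : ∀ x ∈ T, ∀ s : ℂ, HasDerivAt (fun s : ℂ => (A x : ℂ) ^ (-s) - (B x : ℂ) ^ (-s))
      ((A x : ℂ) ^ (-s) * Complex.log (A x) * (-1) - (B x : ℂ) ^ (-s) * Complex.log (B x) * (-1)) s := by
    intro x hx s
    have hA' : (A x : ℂ) ≠ 0 := by exact_mod_cast (hA0 x hx).ne'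
    have hB' : (B x : ℂ) ≠ 0 := by exact_mod_cast (hB0 x hx).ne'
    exact ((hasDerivAt_neg s).const_cpow (Or.inl hA')).sub ((hasDerivAt_neg s).const_cpow (Or.inl hB'))
  have key := hasDerivAt_integral_of_dominated_loc_of_deriv_le (𝕜 := ℂ) (μ := volume.restrict T)
    (F := fun s x => (A x : ℂ) ^ (-s) - (B x : ℂ) ^ (-s)) (x₀ := s₀) (s := Metric.ball s₀ (ε / 2))
    (F' := fun s x => (A x : ℂ) ^ (-s) * Complex.log (A x) * (-1) -
      (B x : ℂ) ^ (-s) * Complex.log (B x) * (-1)) (bound := fun x => g x / (ε / 4))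
    (Metric.ball_mem_nhds _ (by positivity)) ?_ ?_ ?_ ?_ ?_ ?_
  · exact key.2.differentiableAt.differentiableWithinAt
  · exact Eventually.of_forall fun s => by
      apply Measurable.aestronglyMeasurable
      fun_prop
  · refine Integrable.mono' hg ?_ ?_
    · apply Measurable.aestronglyMeasurable
      fun_prop
    · filter_upwards [ae_restrict_mem hT] with x hx using hb s₀ hs₀ x hx
  · apply Measurable.aestronglyMeasurable
    fun_prop
  · filter_upwards [ae_restrict_mem hT] with x hx s hs
    rw [← (hder x hx s).deriv]
    refine Complex.norm_deriv_le_of_forall_mem_sphere_norm_le (by positivity) ?_ ?_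
    · exact Differentiable.diffContOnCl fun z => (hder x hx z).differentiableAt
    · intro z hz
      refine hb z (hball ?_) x hx
      rw [Metric.mem_ball] at hs ⊢
      rw [Metric.mem_sphere] at hz
      linarith [dist_triangle z s s₀]
  · exact hg.div_const _
  · filter_upwards [ae_restrict_mem hT] with x hx s _ using hder x hx s

def Q (c y x : ℝ) : ℝ := (y + x) * (2 * y + x) * (3 * y + c * x)

lemma Q_cont (c y : ℝ) : Continuous (Q c y) := by
  unfold Q; fun_prop

lemma Q_lower {c y x : ℝ} (hc : 1 ≤ c) (hy : 0 ≤ y) (hx : 0 ≤ x) : (y + x) ^ 3 ≤ Q c y x := by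
  unfold Q
  have h1 : y + x ≤ 2 * y + x := by linarith
  have h2 : y + x ≤ 3 * y + c * x := by nlinarith
  have h0 : 0 ≤ y + x := by linarith
  calc (y + x) ^ 3 = (y + x) * (y + x) * (y + x) := by ring
    _ ≤ _ := by gcongr

lemma Q_pos {c y x : ℝ} (hc : 1 ≤ c) (hy : 0 < y) (hx : 0 ≤ x) : 0 < Q c y x :=
  lt_of_lt_of_le (by positivity) (Q_lower hc hy.le hx)

lemma Q_mono {c y x x' : ℝ} (hc : 1 ≤ c) (hy : 0 ≤ y) (hx : 0 ≤ x) (h : x ≤ x') :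
    Q c y x ≤ Q c y x' := by
  unfold Q
  have h0 : 0 ≤ c * x := by positivity
  have hx' : 0 ≤ x' := hx.trans h
  have h1 : 0 ≤ (y + x') * (2 * y + x') := by positivity
  have h2 : 0 ≤ 3 * y + c * x := by positivity
  have h3 : c * x ≤ c * x' := by gcongr
  refine mul_le_mul (mul_le_mul ?_ ?_ ?_ ?_) ?_ h2 h1 <;> linarith

lemma Q_diff {c y j x : ℝ} (hc : 1 ≤ c) (hc2 : c ≤ 2) (hy : 1 ≤ y) (hj : 0 ≤ j)
    (h1 : j ≤ x) (h2 : x ≤ j + 1) : |Q c y (j + 1) - Q c y x| ≤ 40 * (y + j) ^ 2 := by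
  have hx : 0 ≤ x := hj.trans h1
  rw [abs_of_nonneg (by linarith [Q_mono (c := c) hc (by linarith : 0 ≤ y) hx h2])]
  have h3 := Q_mono (c := c) hc (by linarith : 0 ≤ y) hj h1
  have e : Q c y (j + 1) - Q c y j = (2 * y + (j + 1)) * (3 * y + c * (j + 1))
      + (y + j) * (3 * y + c * (j + 1)) + (y + j) * (2 * y + j) * c := by
    unfold Q; ring
  have b1 : 2 * y + (j + 1) ≤ 3 * (y + j) := by linarith
  have b2 : 3 * y + c * (j + 1) ≤ 5 * (y + j) := by nlinarith
  have b3 : 2 * y + j ≤ 2 * (y + j) := by linarith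
  have p : 0 ≤ y + j := by linarith
  have q : 0 ≤ 3 * y + c * (j + 1) := by positivity
  have t1 : (2 * y + (j + 1)) * (3 * y + c * (j + 1)) ≤ (3 * (y + j)) * (5 * (y + j)) := by gcongr
  have t2 : (y + j) * (3 * y + c * (j + 1)) ≤ (y + j) * (5 * (y + j)) := by gcongr
  have t3 : (y + j) * (2 * y + j) * c ≤ (y + j) * (2 * (y + j)) * 2 := by gcongr
  nlinarith [sq_nonneg (y + j)]

noncomputable def r (c : ℝ) (p : ℕ × ℕ) (s : ℂ) : ℂ :=
  (((p.1 : ℝ) + 1 : ℝ) : ℂ) ^ (-s) * ∫ x in Ioc (p.2 : ℝ) (p.2 + 1),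
    ((Q c (p.1 + 1) (p.2 + 1) : ℂ) ^ (-s) - (Q c (p.1 + 1) x : ℂ) ^ (-s))

noncomputable def u (p : ℕ × ℕ) : ℝ :=
  40 * (((p.1 : ℝ) + 1) ^ (-(11 / 10) : ℝ) * ((p.2 : ℝ) + 1) ^ (-(11 / 10) : ℝ))

lemma summable_aux {a : ℝ} (ha : a < -1) : Summable (fun n : ℕ => ((n : ℝ) + 1) ^ a) := by
  have := (summable_nat_add_iff 1).2 (Real.summable_nat_rpow.2 ha)
  simpa using this

lemma summable_aux2 {a : ℝ} (ha : a < -1) :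
    Summable (fun p : ℕ × ℕ => ((p.1 : ℝ) + 1) ^ a * ((p.2 : ℝ) + 1) ^ a) :=
  (summable_aux ha).mul_of_nonneg (summable_aux ha) (fun _ => by positivity) (fun _ => by positivity)

lemma summable_u : Summable u := (summable_aux2 (by norm_num)).mul_left 40

lemma r_inner {c : ℝ} (hc : 1 ≤ c) (hc2 : c ≤ 2) {s : ℂ} (hs : s ∈ U) (i j : ℕ) {x : ℝ}
    (hx : x ∈ Ioc (j : ℝ) (j + 1)) :
    ‖(Q c (i + 1) (j + 1) : ℂ) ^ (-s) - (Q c (i + 1) x : ℂ) ^ (-s)‖ ≤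
      40 * ((i : ℝ) + 1 + j) ^ (-(19 / 10) : ℝ) := by
  have hi : (0 : ℝ) ≤ i := by positivity
  have hj : (0 : ℝ) ≤ j := by positivity
  have hx1 := hx.1.le
  have hx2 := hx.2
  refine cpow_diff' hs (by linarith) ?_ ?_ (Q_diff hc hc2 (by linarith) hj hx1 hx2)
  · refine le_trans ?_ (Q_lower hc (by positivity) (by positivity))
    gcongr; linarith
  · refine le_trans ?_ (Q_lower hc (by positivity) (hj.trans hx1))
    gcongr

lemma r_bound {c : ℝ} (hc : 1 ≤ c) (hc2 : c ≤ 2) {s : ℂ} (hs : s ∈ U) (p : ℕ × ℕ) :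
    ‖r c p s‖ ≤ u p := by
  obtain ⟨i, j⟩ := p
  have hi : (0 : ℝ) ≤ i := by positivity
  have hj : (0 : ℝ) ≤ j := by positivity
  unfold r u
  simp only
  rw [norm_mul, Complex.norm_cpow_eq_rpow_re_of_pos (by positivity)]
  have h1 := norm_setIntegral_le_of_norm_le_const (μ := volume) (s := Ioc (j : ℝ) (j + 1))
    (by simp) (fun x hx => r_inner hc hc2 hs i j hx)
  simp only [measureReal_def, Real.volume_Ioc, add_sub_cancel_left, ENNReal.ofReal_one,
    ENNReal.toReal_one, mul_one] at h1
  have h2 : ((i : ℝ) + 1) ^ (-s).re ≤ ((i : ℝ) + 1) ^ (-(3 / 10) : ℝ) := by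
    apply Real.rpow_le_rpow_of_exponent_le (by linarith)
    simp only [Complex.neg_re]
    linarith [U_re hs]
  have h3 : ((i : ℝ) + 1 + j) ^ (-(19 / 10) : ℝ) ≤
      ((i : ℝ) + 1) ^ (-(8 / 10) : ℝ) * ((j : ℝ) + 1) ^ (-(11 / 10) : ℝ) := by
    rw [show (-(19 / 10) : ℝ) = -(8 / 10) + -(11 / 10) by norm_num, Real.rpow_add (by positivity)]
    gcongr ?_ * ?_
    · exact Real.rpow_le_rpow_of_nonpos (by positivity) (by linarith) (by norm_num)
    · exact Real.rpow_le_rpow_of_nonpos (by positivity) (by linarith) (by norm_num)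
  calc _ ≤ ((i : ℝ) + 1) ^ (-(3 / 10) : ℝ) * (40 * (((i : ℝ) + 1) ^ (-(8 / 10) : ℝ) *
        ((j : ℝ) + 1) ^ (-(11 / 10) : ℝ))) := by
        refine mul_le_mul h2 (h1.trans ?_) (norm_nonneg _) (by positivity)
        gcongr
    _ = _ := by
        rw [show (-(11 / 10) : ℝ) = -(3 / 10) + -(8 / 10) by norm_num, Real.rpow_add (x := (i : ℝ) + 1) (by positivity)]
        ring

noncomputable def R (c : ℝ) (s : ℂ) : ℂ := ∑' p, r c p s

lemma R_diff {c : ℝ} (hc : 1 ≤ c) (hc2 : c ≤ 2) : DifferentiableOn ℂ (R c) U := by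
  refine Complex.differentiableOn_tsum_of_summable_norm summable_u ?_ U_open
    (fun p w hw => r_bound hc hc2 hw p)
  rintro ⟨i, j⟩
  have hj : (0 : ℝ) ≤ j := by positivity
  unfold r
  refine DifferentiableOn.mul ?_ ?_
  · intro s _
    have : ((((i : ℝ) + 1 : ℝ)) : ℂ) ≠ 0 := by
      exact_mod_cast (by positivity : (0 : ℝ) < (i : ℝ) + 1).ne'
    exact (differentiableAt_id.neg.const_cpow (Or.inl this)).differentiableWithinAt
  · refine holo_integral U_open measurableSet_Ioc (A := fun _ => Q c (i + 1) (j + 1))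
      (B := fun x => Q c (i + 1) x) (g := fun _ => 40 * ((i : ℝ) + 1 + j) ^ (-(19 / 10) : ℝ))
      continuous_const (Q_cont _ _) ?_ ?_ ?_ ?_
    · intro x _
      exact Q_pos hc (by positivity) (by positivity)
    · intro x hx
      exact Q_pos hc (by positivity) (hj.trans hx.1.le)
    · exact integrableOn_const (by simp)
    · intro s hs x hx
      exact r_inner hc hc2 hs i j hx

noncomputable def D (c : ℝ) (s : ℂ) : ℂ :=
  ∫ x in Ioi (0 : ℝ), ((Q c 1 x : ℂ) ^ (-s) - ((c * (1 + x) ^ 3 : ℝ) : ℂ) ^ (-s))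

lemma D_inner {c : ℝ} (hc : 1 ≤ c) (hc2 : c ≤ 2) {s : ℂ} (hs : s ∈ U) {x : ℝ} (hx : 0 < x) :
    ‖(Q c 1 x : ℂ) ^ (-s) - ((c * (1 + x) ^ 3 : ℝ) : ℂ) ^ (-s)‖ ≤
      6 * (x + 1) ^ (-(19 / 10) : ℝ) := by
  refine cpow_diff' hs (by linarith) ?_ ?_ ?_
  · rw [add_comm]; exact Q_lower hc (by norm_num) hx.le
  · rw [add_comm x 1]
    have : 0 < (1 + x) ^ 3 := by positivity
    nlinarith
  · have e : Q c 1 x - c * (1 + x) ^ 3 = (1 + x) * (6 - c + 3 * x) := by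
      unfold Q; ring
    rw [e, abs_of_nonneg (mul_nonneg (by linarith) (by linarith))]
    nlinarith

lemma D_int_bound : IntegrableOn (fun x : ℝ => 6 * (x + 1) ^ (-(19 / 10) : ℝ)) (Ioi 0) :=
  (integrableOn_add_rpow_Ioi_of_lt (by norm_num) (by norm_num)).const_mul 6

lemma D_diff {c : ℝ} (hc : 1 ≤ c) (hc2 : c ≤ 2) : DifferentiableOn ℂ (D c) U := by
  refine holo_integral U_open measurableSet_Ioi (A := Q c 1) (B := fun x => c * (1 + x) ^ 3)
    (g := fun x : ℝ => 6 * (x + 1) ^ (-(19 / 10) : ℝ)) (Q_cont _ _) (by fun_prop) ?_ ?_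
    D_int_bound ?_
  · intro x hx
    exact Q_pos hc (by norm_num) (le_of_lt hx)
  · intro x hx
    have : 0 < x := hx
    positivity
  · intro s hs x hx
    exact D_inner hc hc2 hs hx

lemma D_integrable {c : ℝ} (hc : 1 ≤ c) (hc2 : c ≤ 2) {s : ℂ} (hs : s ∈ U) :
    IntegrableOn (fun x : ℝ => (Q c 1 x : ℂ) ^ (-s) - ((c * (1 + x) ^ 3 : ℝ) : ℂ) ^ (-s)) (Ioi 0) := by
  refine Integrable.mono' D_int_bound ?_ ?_
  · have := Q_cont c 1
    have hmA : Measurable (fun x => (Q c 1 x : ℂ)) := by fun_prop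
    apply Measurable.aestronglyMeasurable
    fun_prop
  · filter_upwards [ae_restrict_mem measurableSet_Ioi] with x hx using D_inner hc hc2 hs hx

lemma model_int {c : ℝ} (hc : 1 ≤ c) {s : ℂ} (hs : 1 / 3 < s.re) :
    IntegrableOn (fun x : ℝ => ((c * (1 + x) ^ 3 : ℝ) : ℂ) ^ (-s)) (Ioi 0) ∧
    ∫ x in Ioi (0 : ℝ), ((c * (1 + x) ^ 3 : ℝ) : ℂ) ^ (-s) = (c : ℂ) ^ (-s) / (3 * s - 1) := by
  have h0 : (-(3 * s)).re < -1 := by simp; linarith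
  have hi := integrableOn_Ioi_cpow_of_lt h0 (c := 1) one_pos
  have hv := integral_Ioi_cpow_of_lt h0 (c := 1) one_pos
  have mp := measurePreserving_add_right (volume : Measure ℝ) 1
  have me := (MeasurableEquiv.addRight (1 : ℝ)).measurableEmbedding
  have hpre : (fun x : ℝ => x + 1) ⁻¹' (Ioi 1) = Ioi 0 := by ext x; simp
  have hi' : IntegrableOn (fun x : ℝ => ((x + 1 : ℝ) : ℂ) ^ (-(3 * s))) (Ioi 0) := by
    rw [← hpre]
    exact (mp.integrableOn_comp_preimage me).2 hi
  have hv' : ∫ x in Ioi (0 : ℝ), ((x + 1 : ℝ) : ℂ) ^ (-(3 * s)) = 1 / (3 * s - 1) := by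
    rw [← hpre]
    refine (mp.setIntegral_preimage_emb me (fun x : ℝ => (x : ℂ) ^ (-(3 * s))) (Ioi 1)).trans ?_
    rw [hv]
    simp only [Complex.ofReal_one, Complex.one_cpow]
    rw [show (3 * s - 1) = -(-(3 * s) + 1) by ring, div_neg, neg_div]
  have he : ∀ x ∈ Ioi (0 : ℝ), (c : ℂ) ^ (-s) * ((x + 1 : ℝ) : ℂ) ^ (-(3 * s)) =
      ((c * (1 + x) ^ 3 : ℝ) : ℂ) ^ (-s) := by
    intro x hx
    have hx : 0 < x := hx
    have h1 : (0 : ℝ) ≤ 1 + x := by linarith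
    rw [Complex.ofReal_mul, Complex.mul_cpow_ofReal_nonneg (by linarith) (by positivity)]
    congr 1
    rw [show (1 + x) ^ 3 = (1 + x) * (1 + x) * (1 + x) by ring, Complex.ofReal_mul,
      Complex.mul_cpow_ofReal_nonneg (by positivity) h1, Complex.ofReal_mul,
      Complex.mul_cpow_ofReal_nonneg h1 h1]
    have hne : ((1 + x : ℝ) : ℂ) ≠ 0 := by
      exact_mod_cast (by positivity : (0 : ℝ) < 1 + x).ne'
    rw [← Complex.cpow_add _ _ hne, ← Complex.cpow_add _ _ hne, add_comm x 1]
    congr 1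
    ring
  constructor
  · exact IntegrableOn.congr_fun (hi'.const_mul ((c : ℂ) ^ (-s))) he measurableSet_Ioi
  · rw [← setIntegral_congr_fun measurableSet_Ioi he, integral_const_mul, hv']
    ring

lemma C_int {c : ℝ} (hc : 1 ≤ c) (hc2 : c ≤ 2) {s : ℂ} (hs : s ∈ U) (hs3 : 1 / 3 < s.re) :
    IntegrableOn (fun x : ℝ => (Q c 1 x : ℂ) ^ (-s)) (Ioi 0) ∧
    ∫ x in Ioi (0 : ℝ), (Q c 1 x : ℂ) ^ (-s) = D c s + (c : ℂ) ^ (-s) / (3 * s - 1) := by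
  obtain ⟨h1, h2⟩ := model_int hc hs3
  have h3 := D_integrable hc hc2 hs
  have e : (fun x : ℝ => (Q c 1 x : ℂ) ^ (-s)) = fun x =>
      ((Q c 1 x : ℂ) ^ (-s) - ((c * (1 + x) ^ 3 : ℝ) : ℂ) ^ (-s)) +
        ((c * (1 + x) ^ 3 : ℝ) : ℂ) ^ (-s) := by
    funext x; ring
  constructor
  · rw [e]; exact h3.add h1
  · rw [e, integral_add h3 h1, h2]; rfl


lemma Q_scale (c n x : ℝ) : Q c n (n * x) = n * n * n * Q c 1 x := by
  unfold Q; ring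

lemma cpow_cube {n A : ℝ} (hn : 0 < n) (hA : 0 ≤ A) (s : ℂ) :
    ((n * n * n * A : ℝ) : ℂ) ^ (-s) = (n : ℂ) ^ (-(3 * s)) * (A : ℂ) ^ (-s) := by
  have hne : (n : ℂ) ≠ 0 := by exact_mod_cast hn.ne'
  rw [Complex.ofReal_mul, Complex.mul_cpow_ofReal_nonneg (by positivity) hA,
    Complex.ofReal_mul, Complex.mul_cpow_ofReal_nonneg (by positivity) hn.le,
    Complex.ofReal_mul, Complex.mul_cpow_ofReal_nonneg hn.le hn.le,
    ← Complex.cpow_add _ _ hne, ← Complex.cpow_add _ _ hne]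
  congr 2
  ring

lemma C_scale {c : ℝ} (hc : 1 ≤ c) (hc2 : c ≤ 2) {s : ℂ} (hs : s ∈ U) (hs3 : 1 / 3 < s.re)
    {n : ℝ} (hn : 0 < n) :
    IntegrableOn (fun x : ℝ => (Q c n x : ℂ) ^ (-s)) (Ioi 0) ∧
    ∫ x in Ioi (0 : ℝ), (Q c n x : ℂ) ^ (-s) =
      (n : ℂ) ^ (1 - 3 * s) * (D c s + (c : ℂ) ^ (-s) / (3 * s - 1)) := by
  obtain ⟨h1, h2⟩ := C_int hc hc2 hs hs3
  have hne : (n : ℂ) ≠ 0 := by exact_mod_cast hn.ne'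
  have he : ∀ x ∈ Ioi (0 : ℝ), (n : ℂ) ^ (-(3 * s)) * (Q c 1 x : ℂ) ^ (-s) =
      (Q c n (n * x) : ℂ) ^ (-s) := by
    intro x hx
    rw [Q_scale, cpow_cube hn (Q_pos hc one_pos (le_of_lt hx)).le]
  constructor
  · have := integrableOn_Ioi_comp_mul_left_iff (fun x : ℝ => (Q c n x : ℂ) ^ (-s)) 0 hn
    rw [mul_zero] at this
    rw [← this]
    exact IntegrableOn.congr_fun (h1.const_mul ((n : ℂ) ^ (-(3 * s)))) he measurableSet_Ioi
  · have := integral_comp_mul_left_Ioi' (fun x : ℝ => (Q c n x : ℂ) ^ (-s)) 0 hn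
    rw [mul_zero] at this
    rw [← this, ← setIntegral_congr_fun measurableSet_Ioi he, integral_const_mul, h2,
      sub_eq_add_neg 1, Complex.cpow_add _ _ hne, Complex.cpow_one, Complex.real_smul]
    ring

noncomputable def t (c : ℝ) (s : ℂ) (p : ℕ × ℕ) : ℂ :=
  (((p.1 : ℝ) + 1 : ℝ) : ℂ) ^ (-s) * (Q c (p.1 + 1) (p.2 + 1) : ℂ) ^ (-s)

lemma Ioc_union : (⋃ j : ℕ, Ioc (j : ℝ) (j + 1)) = Ioi 0 := by
  ext x
  simp only [mem_iUnion, mem_Ioc, mem_Ioi]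
  constructor
  · rintro ⟨j, h, _⟩
    exact lt_of_le_of_lt (by positivity) h
  · intro hx
    have h1 : 0 < ⌈x⌉₊ := Nat.ceil_pos.2 hx
    refine ⟨⌈x⌉₊ - 1, ?_, ?_⟩
    · have := Nat.ceil_lt_add_one hx.le
      rw [Nat.cast_sub h1]
      push_cast
      linarith
    · rw [Nat.cast_sub h1]
      push_cast
      linarith [Nat.le_ceil x]

lemma Ioc_disj : Pairwise (Function.onFun Disjoint (fun j : ℕ => Ioc (j : ℝ) (j + 1))) := by
  have := pairwise_disjoint_Ioc_intCast ℝ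
  intro a b hab
  have := this (show (a : ℤ) ≠ b by exact_mod_cast hab)
  simpa [Function.onFun] using this

lemma t_tsum {c : ℝ} (hc : 1 ≤ c) (hc2 : c ≤ 2) {s : ℂ} (hs : s ∈ U) (hs2 : 1 / 2 < s.re)
    (hsum : Summable (t c s)) :
    ∑' p, t c s p = R c s + riemannZeta (4 * s - 1) * (D c s + (c : ℂ) ^ (-s) / (3 * s - 1)) := by
  have hr : Summable (fun p => r c p s) :=
    Summable.of_norm_bounded summable_u (fun p => r_bound hc hc2 hs p)
  have hC := fun i : ℕ => C_scale hc hc2 hs (by linarith) (by positivity : 0 < (i : ℝ) + 1)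
  have hq : ∀ p : ℕ × ℕ, t c s p - r c p s = (((p.1 : ℝ) + 1 : ℝ) : ℂ) ^ (-s) *
      ∫ x in Ioc (p.2 : ℝ) (p.2 + 1), (Q c (p.1 + 1) x : ℂ) ^ (-s) := by
    rintro ⟨i, j⟩
    unfold t r
    simp only
    rw [integral_sub]
    · simp
      ring
    · exact integrableOn_const (by simp)
    · refine (hC i).1.mono_set ?_
      intro x hx
      exact lt_of_le_of_lt (by positivity) hx.1
  have hd : Summable (fun p => t c s p - r c p s) := hsum.sub hr
  have e1 : ∑' p, t c s p = R c s + ∑' p, (t c s p - r c p s) := by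
    unfold R
    rw [← hr.tsum_add hd]
    congr 1; funext p; ring
  rw [e1, hd.tsum_prod]
  congr 1
  have e2 : ∀ i : ℕ, ∑' j : ℕ, (t c s (i, j) - r c (i, j) s) =
      1 / ((i : ℂ) + 1) ^ (4 * s - 1) * (D c s + (c : ℂ) ^ (-s) / (3 * s - 1)) := by
    intro i
    have hne : (i : ℂ) + 1 ≠ 0 := by exact_mod_cast Nat.succ_ne_zero i
    simp only [hq]
    rw [tsum_mul_left]
    have h3 := hasSum_integral_iUnion (f := fun x : ℝ => (Q c (i + 1) x : ℂ) ^ (-s)) (μ := volume)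
      (s := fun j : ℕ => Ioc (j : ℝ) (j + 1)) (fun _ => measurableSet_Ioc) Ioc_disj
      (by rw [Ioc_union]; exact (hC i).1)
    rw [h3.tsum_eq, Ioc_union, (hC i).2, ← mul_assoc]
    congr 1
    push_cast
    rw [← Complex.cpow_add _ _ hne, one_div, ← Complex.cpow_neg]
    congr 1
    ring
  simp only [e2]
  rw [tsum_mul_right, zeta_eq_tsum_one_div_nat_add_one_cpow]
  simp
  linarith

noncomputable def e : ℕ ⊕ (ℕ × ℕ ⊕ ℕ × ℕ) ≃ ℕ × ℕ where
  toFun := Sum.elim (fun i => (i, i)) (Sum.elim (fun p => (p.1 + 1 + p.2, p.1))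
    (fun p => (p.1, p.1 + 1 + p.2)))
  invFun := fun q => if q.1 = q.2 then Sum.inl q.1 else
    if q.2 < q.1 then Sum.inr (Sum.inl (q.2, q.1 - q.2 - 1)) else
      Sum.inr (Sum.inr (q.1, q.2 - q.1 - 1))
  left_inv := by
    rintro (i | ⟨i, j⟩ | ⟨i, j⟩)
    · simp
    · have h1 : i + 1 + j ≠ i := by omega
      have h2 : i < i + 1 + j := by omega
      have h3 : i + 1 + j - i - 1 = j := by omega
      simp [h1, h2, h3]
    · have h1 : i ≠ i + 1 + j := by omega
      have h2 : ¬ (i + 1 + j < i) := by omega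
      have h3 : i + 1 + j - i - 1 = j := by omega
      simp [h1, h2, h3]
  right_inv := by
    rintro ⟨a, b⟩
    rcases lt_trichotomy a b with h | h | h
    · have h1 : a ≠ b := by omega
      have h2 : ¬ (b < a) := by omega
      simp [h1, h2]; omega
    · simp [h]
    · have h1 : a ≠ b := by omega
      simp [h1, h]; omega

lemma e_tsum {f : ℕ × ℕ → ℂ} (hf : Summable f) :
    ∑' p, f p = ∑' i : ℕ, f (i, i) + (∑' p : ℕ × ℕ, f (p.1 + 1 + p.2, p.1) +
      ∑' p : ℕ × ℕ, f (p.1, p.1 + 1 + p.2)) := by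
  have h0 : Summable (f ∘ e) := e.summable_iff.2 hf
  have h1 : Summable (f ∘ e ∘ Sum.inr) := h0.comp_injective Sum.inr_injective
  have h2 := h0.comp_injective (Sum.inl_injective)
  have h3 := h1.comp_injective (Sum.inl_injective)
  have h4 := h1.comp_injective (Sum.inr_injective)
  rw [← e.tsum_eq f]
  refine (Summable.tsum_sum h2 h1).trans ?_
  congr 1
  exact (Summable.tsum_sum h3 h4)

noncomputable def f (s : ℂ) (p : ℕ × ℕ) : ℂ :=
  ((((p.1 + 1) * (p.2 + 1) * ((p.1 + 1) + (p.2 + 1)) *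
          ((p.1 + 1) + 2 * (p.2 + 1)) : ℕ) : ℂ)) ^ (-s)

lemma f_summable {s : ℂ} (hs : 1 / 2 < s.re) : Summable (f s) := by
  refine Summable.of_norm_bounded (summable_aux2 (a := -(2 * s.re)) (by linarith)) ?_
  rintro ⟨i, j⟩
  unfold f
  rw [Complex.norm_natCast_cpow_of_pos (by positivity)]
  simp only [Complex.neg_re]
  rw [← Real.mul_rpow (by positivity) (by positivity), neg_mul_eq_mul_neg, Real.rpow_mul (by positivity)]
  refine Real.rpow_le_rpow_of_nonpos (by positivity) ?_ (by linarith)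
  push_cast
  have hi : (0 : ℝ) ≤ i := by positivity
  have hj : (0 : ℝ) ≤ j := by positivity
  have : ((i : ℝ) + 1) * (j + 1) ≤ ((i + 1) + (j + 1)) * ((i + 1) + 2 * (j + 1)) := by nlinarith
  have h2 : (0 : ℝ) ≤ ((i : ℝ) + 1) * (j + 1) := by positivity
  calc _ = ((i : ℝ) + 1) * (j + 1) * (((i : ℝ) + 1) * (j + 1)) := by norm_cast; ring
    _ ≤ ((i : ℝ) + 1) * (j + 1) * (((i + 1) + (j + 1)) * ((i + 1) + 2 * (j + 1))) := by gcongr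
    _ = _ := by ring

lemma f1 (s : ℂ) (p : ℕ × ℕ) : f s (p.1 + 1 + p.2, p.1) = t 1 s p := by
  obtain ⟨i, j⟩ := p
  have h : 0 ≤ Q 1 (i + 1) (j + 1) := (Q_pos le_rfl (by positivity) (by positivity)).le
  unfold f t
  simp only
  rw [← Complex.mul_cpow_ofReal_nonneg (by positivity) h]
  congr 1
  unfold Q
  push_cast
  ring

lemma f2 (s : ℂ) (p : ℕ × ℕ) : f s (p.1, p.1 + 1 + p.2) = t 2 s p := by
  obtain ⟨i, j⟩ := p
  have h : 0 ≤ Q 2 (i + 1) (j + 1) := (Q_pos (by norm_num) (by positivity) (by positivity)).le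
  unfold f t
  simp only
  rw [← Complex.mul_cpow_ofReal_nonneg (by positivity) h]
  congr 1
  unfold Q
  push_cast
  ring

lemma f0 {s : ℂ} (hs : 1 / 2 < s.re) :
    ∑' i : ℕ, f s (i, i) = (6 : ℂ) ^ (-s) * riemannZeta (4 * s) := by
  rw [zeta_eq_tsum_one_div_nat_add_one_cpow (by simp; linarith), ← tsum_mul_left]
  congr 1
  funext i
  have hn : (0 : ℝ) < (i : ℝ) + 1 := by positivity
  have hne : (i : ℂ) + 1 ≠ 0 := by exact_mod_cast Nat.succ_ne_zero i
  have : f s (i, i) = ((((i : ℝ) + 1) * (i + 1) * (i + 1) * ((i + 1) * 6) : ℝ) : ℂ) ^ (-s) := by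
    unfold f
    congr 1
    push_cast
    ring
  rw [this, cpow_cube hn (by positivity), Complex.ofReal_mul,
    Complex.mul_cpow_ofReal_nonneg hn.le (by norm_num), one_div, ← Complex.cpow_neg]
  push_cast
  rw [← mul_assoc, ← Complex.cpow_add _ _ hne, mul_comm]
  congr 2
  ring

noncomputable def G (s : ℂ) : ℂ := (6 : ℂ) ^ s * ((6 : ℂ) ^ (-s) * riemannZeta (4 * s) +
  ((R 1 s + riemannZeta (4 * s - 1) * (D 1 s + ((1 : ℝ) : ℂ) ^ (-s) / (3 * s - 1))) +
  (R 2 s + riemannZeta (4 * s - 1) * (D 2 s + ((2 : ℝ) : ℂ) ^ (-s) / (3 * s - 1)))))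

lemma G_eq {s : ℂ} (hs : s ∈ U) (hs2 : 1 / 2 < s.re) : (6 : ℂ) ^ s * ∑' p, f s p = G s := by
  have hf := f_summable hs2
  have h0 : Summable (f s ∘ e) := e.summable_iff.2 hf
  have h1 : Summable (f s ∘ e ∘ Sum.inr) := h0.comp_injective Sum.inr_injective
  have h3 : Summable (t 1 s) := (h1.comp_injective (Sum.inl_injective)).congr (f1 s)
  have h4 : Summable (t 2 s) := (h1.comp_injective (Sum.inr_injective)).congr (f2 s)
  rw [e_tsum hf, f0 hs2]
  simp only [f1, f2]
  rw [t_tsum le_rfl (by norm_num) hs hs2 h3, t_tsum (by norm_num) le_rfl hs hs2 h4]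
  rfl

lemma G_diff : DifferentiableOn ℂ G (U \ {1 / 2, 1 / 3}) := by
  intro s hs
  obtain ⟨hU, hne⟩ := hs
  simp only [mem_insert_iff, mem_singleton_iff, not_or] at hne
  have hn := U_open.mem_nhds hU
  have hR1 := (R_diff le_rfl (by norm_num)).differentiableAt hn
  have hR2 := (R_diff (by norm_num) le_rfl).differentiableAt hn
  have hD1 := (D_diff le_rfl (by norm_num)).differentiableAt hn
  have hD2 := (D_diff (by norm_num) le_rfl).differentiableAt hn
  have hre := U_re hU
  have z1 : DifferentiableAt ℂ (fun s : ℂ => riemannZeta (4 * s)) s := by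
    refine DifferentiableAt.fun_comp' (g := riemannZeta) s (differentiableAt_riemannZeta ?_) (by fun_prop)
    intro h
    have := congrArg Complex.re h
    simp at this
    linarith
  have z2 : DifferentiableAt ℂ (fun s : ℂ => riemannZeta (4 * s - 1)) s := by
    refine DifferentiableAt.fun_comp' (g := riemannZeta) s (differentiableAt_riemannZeta ?_) (by fun_prop)
    intro h
    apply hne.1
    linear_combination h / 4
  have h3 : 3 * s - 1 ≠ 0 := by
    intro h
    apply hne.2
    linear_combination h / 3
  have p6 : DifferentiableAt ℂ (fun s : ℂ => (6 : ℂ) ^ s) s :=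
    differentiableAt_id.const_cpow (Or.inl (by norm_num))
  have p6' : DifferentiableAt ℂ (fun s : ℂ => (6 : ℂ) ^ (-s)) s :=
    differentiableAt_id.neg.const_cpow (Or.inl (by norm_num))
  have p1 : DifferentiableAt ℂ (fun s : ℂ => ((1 : ℝ) : ℂ) ^ (-s)) s :=
    differentiableAt_id.neg.const_cpow (Or.inl (by norm_num))
  have p2 : DifferentiableAt ℂ (fun s : ℂ => ((2 : ℝ) : ℂ) ^ (-s)) s :=
    differentiableAt_id.neg.const_cpow (Or.inl (by norm_num))
  have l3 : DifferentiableAt ℂ (fun s : ℂ => 3 * s - 1) s := by fun_prop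
  exact (p6.mul ((p6'.mul z1).add ((hR1.add (z2.mul (hD1.add (p1.div l3 h3)))).add
    (hR2.add (z2.mul (hD2.add (p2.div l3 h3))))))).differentiableWithinAt

lemma third_mem : (1 / 3 : ℂ) ∈ U := by
  constructor
  · show (3 / 10 : ℝ) < (1 / 3 : ℂ).re
    norm_num
  · rw [mem_ball_zero_iff]
    norm_num

lemma G_lim : Tendsto (fun s : ℂ => (s - 1 / 3) * G s) (𝓝[≠] (1 / 3))
      (𝓝 ((((2 : ℝ) ^ ((1 : ℝ) / 3) + 1 : ℝ) : ℂ) * riemannZeta (1 / 3) /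
        (((3 : ℝ) ^ ((2 : ℝ) / 3) : ℝ) : ℂ))) := by
  have hn := U_open.mem_nhds third_mem
  have hR1 := ((R_diff le_rfl (by norm_num)).differentiableAt hn).continuousAt
  have hR2 := ((R_diff (by norm_num) le_rfl).differentiableAt hn).continuousAt
  have hD1 := ((D_diff le_rfl (by norm_num)).differentiableAt hn).continuousAt
  have hD2 := ((D_diff (by norm_num) le_rfl).differentiableAt hn).continuousAt
  have z1 : ContinuousAt (fun s : ℂ => riemannZeta (4 * s)) (1 / 3) :=
    (DifferentiableAt.fun_comp' (g := riemannZeta) _ (differentiableAt_riemannZeta (by norm_num))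
      (by fun_prop)).continuousAt
  have z2 : ContinuousAt (fun s : ℂ => riemannZeta (4 * s - 1)) (1 / 3) :=
    (DifferentiableAt.fun_comp' (g := riemannZeta) _ (differentiableAt_riemannZeta (by norm_num))
      (by fun_prop)).continuousAt
  have p6 : ContinuousAt (fun s : ℂ => (6 : ℂ) ^ s) (1 / 3) :=
    (differentiableAt_id.const_cpow (Or.inl (by norm_num))).continuousAt
  have p6' : ContinuousAt (fun s : ℂ => (6 : ℂ) ^ (-s)) (1 / 3) :=
    (differentiableAt_id.neg.const_cpow (Or.inl (by norm_num))).continuousAt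
  have p1 : ContinuousAt (fun s : ℂ => ((1 : ℝ) : ℂ) ^ (-s)) (1 / 3) :=
    (differentiableAt_id.neg.const_cpow (Or.inl (by norm_num))).continuousAt
  have p2 : ContinuousAt (fun s : ℂ => ((2 : ℝ) : ℂ) ^ (-s)) (1 / 3) :=
    (differentiableAt_id.neg.const_cpow (Or.inl (by norm_num))).continuousAt
  have l : ContinuousAt (fun s : ℂ => s - 1 / 3) (1 / 3) := by fun_prop
  have H : ContinuousAt (fun s : ℂ => (6 : ℂ) ^ s * ((s - 1 / 3) * ((6 : ℂ) ^ (-s) * riemannZeta (4 * s)) +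
    (((s - 1 / 3) * R 1 s + riemannZeta (4 * s - 1) * ((s - 1 / 3) * D 1 s + ((1 : ℝ) : ℂ) ^ (-s) / 3)) +
    ((s - 1 / 3) * R 2 s + riemannZeta (4 * s - 1) * ((s - 1 / 3) * D 2 s + ((2 : ℝ) : ℂ) ^ (-s) / 3))))) (1 / 3) :=
    p6.mul ((l.mul (p6'.mul z1)).add (((l.mul hR1).add (z2.mul ((l.mul hD1).add (p1.div_const 3)))).add
      ((l.mul hR2).add (z2.mul ((l.mul hD2).add (p2.div_const 3))))))
  have H2 := H.tendsto.mono_left (nhdsWithin_le_nhds (s := {(1 / 3 : ℂ)}ᶜ))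
  have key : (6 : ℂ) ^ (1 / 3 : ℂ) * (riemannZeta (1 / 3) * (1 / 3) +
      riemannZeta (1 / 3) * (((2 : ℝ) : ℂ) ^ (-(1 / 3) : ℂ) / 3)) =
      (((2 : ℝ) ^ ((1 : ℝ) / 3) + 1 : ℝ) : ℂ) * riemannZeta (1 / 3) /
        (((3 : ℝ) ^ ((2 : ℝ) / 3) : ℝ) : ℂ) := by
    have a6 : (6 : ℂ) ^ (1 / 3 : ℂ) = (((6 : ℝ) ^ ((1 : ℝ) / 3) : ℝ) : ℂ) := by
      rw [Complex.ofReal_cpow (by norm_num)]; norm_num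
    have a2 : ((2 : ℝ) : ℂ) ^ (-(1 / 3) : ℂ) = (((2 : ℝ) ^ (-((1 : ℝ) / 3)) : ℝ) : ℂ) := by
      rw [Complex.ofReal_cpow (by norm_num)]; norm_num
    have hr : (6 : ℝ) ^ ((1 : ℝ) / 3) * (1 / 3 + (2 : ℝ) ^ (-((1 : ℝ) / 3)) / 3) =
        ((2 : ℝ) ^ ((1 : ℝ) / 3) + 1) / (3 : ℝ) ^ ((2 : ℝ) / 3) := by
      have h32 : (3 : ℝ) ^ ((1 : ℝ) / 3) * (3 : ℝ) ^ ((2 : ℝ) / 3) = 3 := by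
        rw [← Real.rpow_add (by norm_num)]; norm_num
      have hp2 : (0 : ℝ) < (2 : ℝ) ^ ((1 : ℝ) / 3) := by positivity
      have hp3 : (0 : ℝ) < (3 : ℝ) ^ ((2 : ℝ) / 3) := by positivity
      rw [show (6 : ℝ) = 2 * 3 by norm_num, Real.mul_rpow (by norm_num) (by norm_num),
        Real.rpow_neg (by norm_num), eq_div_iff hp3.ne']
      field_simp
      linear_combination h32
    rw [a6, a2, mul_div_right_comm, ← Complex.ofReal_div, ← hr]
    push_cast
    ring
  have hval : (6 : ℂ) ^ (1 / 3 : ℂ) * (((1 / 3 : ℂ) - 1 / 3) * ((6 : ℂ) ^ (-(1 / 3) : ℂ) * riemannZeta (4 * (1 / 3))) +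
    ((((1 / 3 : ℂ) - 1 / 3) * R 1 (1 / 3) + riemannZeta (4 * (1 / 3) - 1) * (((1 / 3 : ℂ) - 1 / 3) * D 1 (1 / 3) + ((1 : ℝ) : ℂ) ^ (-(1 / 3) : ℂ) / 3)) +
    (((1 / 3 : ℂ) - 1 / 3) * R 2 (1 / 3) + riemannZeta (4 * (1 / 3) - 1) * (((1 / 3 : ℂ) - 1 / 3) * D 2 (1 / 3) + ((2 : ℝ) : ℂ) ^ (-(1 / 3) : ℂ) / 3)))) =
      (6 : ℂ) ^ (1 / 3 : ℂ) * (riemannZeta (1 / 3) * (1 / 3) +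
      riemannZeta (1 / 3) * (((2 : ℝ) : ℂ) ^ (-(1 / 3) : ℂ) / 3)) := by
    rw [show (4 * (1 / 3) - 1 : ℂ) = 1 / 3 by norm_num, Complex.ofReal_one, Complex.one_cpow]
    ring
  rw [← key, ← hval]
  refine H2.congr' ?_
  filter_upwards [self_mem_nhdsWithin] with s hs
  have hs : s ≠ 1 / 3 := hs
  have h3 : 3 * s - 1 ≠ 0 := by
    intro h
    apply hs
    linear_combination h / 3
  have hq : ∀ a : ℂ, a / 3 = (s - 1 / 3) * (a / (3 * s - 1)) := by
    intro a
    field_simp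
  unfold G
  rw [hq (((1 : ℝ) : ℂ) ^ (-s)), hq (((2 : ℝ) : ℂ) ^ (-s))]
  ring

/-- Identity theorem on a half of the domain, cut out by a convex open set avoiding the reals. -/
lemma half {Z : ℂ → ℂ} {H : Set ℂ} (hHo : IsOpen H) (hHc : Convex ℝ H)
    (hH : ∀ s ∈ H, s.im ≠ 0) {z₀ : ℂ} (hz : z₀ ∈ U ∩ H) (hz2 : 1 / 2 < z₀.re)
    (hhol : DifferentiableOn ℂ Z {s : ℂ | 1 / 4 < s.re ∧ s ≠ 1 / 2 ∧ s ≠ 1 / 3})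
    (hZ : ∀ s ∈ U, 1 / 2 < s.re → Z s = G s) : EqOn Z G (U ∩ H) := by
  have ho : IsOpen (U ∩ H) := U_open.inter hHo
  have n2 : ∀ s ∈ H, s ≠ 1 / 2 := by
    rintro s hs rfl
    exact hH _ hs (by norm_num)
  have n3 : ∀ s ∈ H, s ≠ 1 / 3 := by
    rintro s hs rfl
    exact hH _ hs (by norm_num)
  have a1 : AnalyticOnNhd ℂ Z (U ∩ H) := by
    refine (hhol.mono ?_).analyticOnNhd ho
    rintro s ⟨h1, h2⟩
    exact ⟨by linarith [U_re h1], n2 s h2, n3 s h2⟩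
  have a2 : AnalyticOnNhd ℂ G (U ∩ H) := by
    refine (G_diff.mono ?_).analyticOnNhd ho
    rintro s ⟨h1, h2⟩
    exact ⟨h1, by simpa using ⟨by simpa using n2 s h2, by simpa using n3 s h2⟩⟩
  refine a1.eqOn_of_preconnected_of_eventuallyEq a2 (U_convex.inter hHc).isPreconnected hz ?_
  filter_upwards [U_open.mem_nhds hz.1,
    (isOpen_lt continuous_const Complex.continuous_re).mem_nhds hz2] with s h1 h2 using hZ s h1 h2

lemma Z_eq {Z : ℂ → ℂ}
    (hhol : DifferentiableOn ℂ Z {s : ℂ | 1 / 4 < s.re ∧ s ≠ 1 / 2 ∧ s ≠ 1 / 3})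
    (hZ : ∀ s ∈ U, 1 / 2 < s.re → Z s = G s) : EqOn Z G (U \ {1 / 2, 1 / 3}) := by
  have hup : EqOn Z G (U ∩ {s | 0 < s.im}) := by
    refine half (isOpen_lt continuous_const Complex.continuous_im) (convex_halfSpace_im_gt 0)
      (fun s hs => ne_of_gt hs) (z₀ := ⟨6 / 10, 1 / 10⟩) ⟨⟨?_, ?_⟩, ?_⟩ ?_ hhol hZ
    · show (3 / 10 : ℝ) < 6 / 10
      norm_num
    · rw [mem_ball_zero_iff, ← sq_lt_one_iff₀ (norm_nonneg _), ← Complex.normSq_eq_norm_sq,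
        Complex.normSq_mk]
      norm_num
    · show (0 : ℝ) < 1 / 10
      norm_num
    · norm_num
  have hdn : EqOn Z G (U ∩ {s | s.im < 0}) := by
    refine half (isOpen_lt Complex.continuous_im continuous_const) (convex_halfSpace_im_lt 0)
      (fun s hs => ne_of_lt hs) (z₀ := ⟨6 / 10, -1 / 10⟩) ⟨⟨?_, ?_⟩, ?_⟩ ?_ hhol hZ
    · show (3 / 10 : ℝ) < 6 / 10
      norm_num
    · rw [mem_ball_zero_iff, ← sq_lt_one_iff₀ (norm_nonneg _), ← Complex.normSq_eq_norm_sq,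
        Complex.normSq_mk]
      norm_num
    · show (-1 / 10 : ℝ) < 0
      norm_num
    · norm_num
  intro s hs
  have ho : IsOpen (U \ {1 / 2, 1 / 3}) :=
    U_open.sdiff (Set.Finite.isClosed (by simp))
  have hn := ho.mem_nhds hs
  rcases lt_trichotomy s.im 0 with h | h | h
  · exact hdn ⟨hs.1, h⟩
  swap
  · exact hup ⟨hs.1, h⟩
  have cG : ContinuousAt G s := (G_diff.differentiableAt hn).continuousAt
  have cZ : ContinuousAt Z s := by
    refine ((hhol.mono ?_).differentiableAt hn).continuousAt
    rintro w ⟨h1, h2⟩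
    simp only [mem_insert_iff, mem_singleton_iff, not_or] at h2
    exact ⟨by linarith [U_re h1], h2⟩
  have hl : Tendsto (fun x : ℝ => s + x * Complex.I) (𝓝[>] 0) (𝓝 s) := by
    have : ContinuousAt (fun x : ℝ => s + x * Complex.I) 0 := by fun_prop
    have := this.tendsto.mono_left (nhdsWithin_le_nhds (s := Ioi (0 : ℝ)))
    simpa using this
  refine tendsto_nhds_unique (cZ.tendsto.comp hl) ((cG.tendsto.comp hl).congr' ?_)
  filter_upwards [self_mem_nhdsWithin, hl.eventually (U_open.mem_nhds hs.1)] with x hx hxU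
  refine (hup ⟨hxU, ?_⟩).symm
  have : (0 : ℝ) < x := hx
  simpa [h] using this

end SO5

theorem stmt8 (Z : ℂ → ℂ)
    (hhol : DifferentiableOn ℂ Z
      {s : ℂ | 1 / 4 < s.re ∧ s ≠ 1 / 2 ∧ s ≠ 1 / 3})
    (hser : ∀ s : ℂ, 1 / 2 < s.re →
      Z s = (6 : ℂ) ^ s * ∑' p : ℕ × ℕ,
        ((((p.1 + 1) * (p.2 + 1) * ((p.1 + 1) + (p.2 + 1)) *
          ((p.1 + 1) + 2 * (p.2 + 1)) : ℕ) : ℂ)) ^ (-s)) :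
    Tendsto (fun s : ℂ => (s - 1 / 3) * Z s) (𝓝[≠] (1 / 3))
      (𝓝 ((((2 : ℝ) ^ ((1 : ℝ) / 3) + 1 : ℝ) : ℂ) * riemannZeta (1 / 3) /
        (((3 : ℝ) ^ ((2 : ℝ) / 3) : ℝ) : ℂ))) := by
  have hE := SO5.Z_eq hhol (fun s hU hs => (hser s hs).trans (SO5.G_eq hU hs))
  refine SO5.G_lim.congr' ?_
  have h2 : ∀ᶠ s : ℂ in 𝓝[≠] (1 / 3), s ≠ 1 / 2 :=
    (isOpen_ne.mem_nhds (by norm_num : (1 / 3 : ℂ) ≠ 1 / 2)) |> mem_nhdsWithin_of_mem_nhds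
  filter_upwards [self_mem_nhdsWithin, h2,
    mem_nhdsWithin_of_mem_nhds (SO5.U_open.mem_nhds SO5.third_mem)] with s h3 h2 hU
  have h3 : s ≠ 1 / 3 := h3
  rw [hE ⟨hU, by rw [Set.mem_insert_iff, Set.mem_singleton_iff, not_or]; exact ⟨h2, h3⟩⟩]
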